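/- Let p_1 ≠ p_2 and q_1 ≠ q_2 be indices in {1,…,N}, and for λ ≥ 0 define the 4-point function G_{|p_1q_1p_2q_2|}(λ) := (1/N)·∂⁴(log Z)/∂J_{p_1q_1}∂K_{q_1p_2}∂J_{p_2q_2}∂K_{q_2p_1} evaluated at (J,K) = (0,0). Then G_{|p_1q_1p_2q_2|}(0) = 0, and lim_{λ→0⁺} G_{|p_1q_1p_2q_2|}(λ)/λ = −1/[ (E_{p_1}+Ẽ_{q_1})(E_{p_2}+Ẽ_{q_1})(E_{p_2}+Ẽ_{q_2})(E_{p_1}+Ẽ_{q_2}) ]. -/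

import Mathlib

open MeasureTheory Matrix

/-- The LSZ action `S(Φ) = Σ_{m,n} (E_n + Ẽ_m)|Φ_{nm}|² + (λ/2)·Tr((Φ*Φ)²)`,
viewed as a complex number. -/
noncomputable def lszAction (N : ℕ) (E Et : Fin N → ℝ) (lam : ℝ)
    (Φ : Fin N → Fin N → ℂ) : ℂ :=
  (∑ n, ∑ m, (((E n + Et m : ℝ)) : ℂ) * ((Complex.normSq (Φ n m) : ℝ) : ℂ))
    + ((lam / 2 : ℝ) : ℂ) *
      ((((Matrix.of Φ)ᴴ * Matrix.of Φ) * ((Matrix.of Φ)ᴴ * Matrix.of Φ)).trace)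

/-- The integrand of the LSZ partition function with sources `J`, `K`. -/
noncomputable def lszIntegrand (N : ℕ) (E Et : Fin N → ℝ) (lam : ℝ)
    (J K : Fin N → Fin N → ℂ) (Φ : Fin N → Fin N → ℂ) : ℂ :=
  Complex.exp (-(N : ℂ) * lszAction N E Et lam Φ
    + (N : ℂ) * ((∑ m, ∑ n, J n m * (starRingEnd ℂ) (Φ n m))
      + ∑ m, ∑ n, K m n * Φ n m))

/-- The LSZ partition function `Z(J,K)`. -/
noncomputable def lszZ (N : ℕ) (E Et : Fin N → ℝ) (lam : ℝ)
    (J K : Fin N → Fin N → ℂ) : ℂ :=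
  ∫ Φ : Fin N → Fin N → ℂ, lszIntegrand N E Et lam J K Φ

/-- The elementary matrix with a single `1` at position `(a,b)`. -/
def eMat (N : ℕ) (a b : Fin N) : Fin N → Fin N → ℂ :=
  fun i j => if i = a ∧ j = b then 1 else 0

/-- The holomorphic partial derivative `∂/∂J_{ab}` of a function of `(J,K)`. -/
noncomputable def dJ (N : ℕ) (a b : Fin N)
    (f : (Fin N → Fin N → ℂ) → (Fin N → Fin N → ℂ) → ℂ) :
    (Fin N → Fin N → ℂ) → (Fin N → Fin N → ℂ) → ℂ :=
  fun J K => deriv (fun t : ℂ => f (J + t • eMat N a b) K) 0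

/-- The holomorphic partial derivative `∂/∂K_{ab}` of a function of `(J,K)`. -/
noncomputable def dK (N : ℕ) (a b : Fin N)
    (f : (Fin N → Fin N → ℂ) → (Fin N → Fin N → ℂ) → ℂ) :
    (Fin N → Fin N → ℂ) → (Fin N → Fin N → ℂ) → ℂ :=
  fun J K => deriv (fun t : ℂ => f J (K + t • eMat N a b)) 0

/-- The 4-point function
`G_{|p₁q₁p₂q₂|}(λ) = (1/N)·∂⁴(log Z)/∂J_{p₁q₁}∂K_{q₁p₂}∂J_{p₂q₂}∂K_{q₂p₁}|_{J=K=0}`. -/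
noncomputable def lszG4 (N : ℕ) (E Et : Fin N → ℝ) (p₁ q₁ p₂ q₂ : Fin N) (lam : ℝ) : ℂ :=
  (1 / (N : ℂ)) *
    dJ N p₁ q₁ (dK N q₁ p₂ (dJ N p₂ q₂ (dK N q₂ p₁
      (fun J K => Complex.log (lszZ N E Et lam J K))))) 0 0

/-!
Near zero sources `log Z` generates the joint cumulants of the entries of `Φ`. The interaction
`Tr((Φ*Φ)²)` is the sum over all pairs of positions of the products of the four entries at the
corners of a rectangle (`vertex`). Sign changes of single rows and columns are symmetries of the
model at every coupling, so the three products of pair expectations in the fourth cumulant vanish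
and the 4-point function is `N³` times the expectation of one vertex. Its derivative in the coupling
is minus an expectation of that vertex times the interaction in the Gaussian model. There every
entry may be rotated by its own phase, so only the complex conjugate vertex contributes. It occurs
twice, once for each of the two ways of labelling its corners, and cancels the factor `1/2` of the
coupling; what remains is the product of the variances of four independent complex Gaussians.
-/

section ExponentialGrowth

variable {V : Type*} [NormedAddCommGroup V]

/-- Continuous complex observables of at most exponential growth: the class of functions integrated
against a measure with exponential moments. -/
def HasExpGrowth (P : V → ℂ) : Prop :=
  Continuous P ∧ ∃ C R : ℝ, ∀ x, ‖P x‖ ≤ C * Real.exp (R * ‖x‖)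

lemma HasExpGrowth.continuous {P : V → ℂ} (hP : HasExpGrowth P) : Continuous P := hP.1

lemma hasExpGrowth_const (c : ℂ) : HasExpGrowth fun _ : V => c :=
  ⟨continuous_const, ‖c‖, 0, fun x => by simp⟩

lemma HasExpGrowth.mul {P Q : V → ℂ} (hP : HasExpGrowth P) (hQ : HasExpGrowth Q) :
    HasExpGrowth fun x => P x * Q x := by
  obtain ⟨hPc, C, R, hPR⟩ := hP
  obtain ⟨hQc, C', R', hQR⟩ := hQ
  refine ⟨hPc.mul hQc, C * C', R + R', fun x => ?_⟩
  calc ‖P x * Q x‖ = ‖P x‖ * ‖Q x‖ := norm_mul _ _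
    _ ≤ (C * Real.exp (R * ‖x‖)) * (C' * Real.exp (R' * ‖x‖)) :=
      mul_le_mul (hPR x) (hQR x) (norm_nonneg _) ((norm_nonneg _).trans (hPR x))
    _ = C * C' * Real.exp ((R + R') * ‖x‖) := by rw [add_mul, Real.exp_add]; ring

lemma hasExpGrowth_exp_norm (R : ℝ) : HasExpGrowth fun x : V => (Real.exp (R * ‖x‖) : ℂ) :=
  ⟨by fun_prop, 1, R, fun x => by
    rw [one_mul, Complex.norm_real, Real.norm_of_nonneg (Real.exp_pos _).le]⟩

variable [NormedSpace ℝ V]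

lemma hasExpGrowth_clm (L : V →L[ℝ] ℂ) : HasExpGrowth fun x => L x := by
  refine ⟨L.continuous, 1, ‖L‖, fun x => (L.le_opNorm x).trans ?_⟩
  linarith [Real.add_one_le_exp (‖L‖ * ‖x‖)]

lemma hasExpGrowth_cexp_clm (L : V →L[ℝ] ℂ) : HasExpGrowth fun x => Complex.exp (L x) := by
  refine ⟨by fun_prop, 1, ‖L‖, fun x => ?_⟩
  rw [one_mul, Complex.norm_exp]
  exact Real.exp_le_exp.2 ((Complex.re_le_norm _).trans (L.le_opNorm x))

end ExponentialGrowth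

section ExponentialMoments

variable {V : Type*} [NormedAddCommGroup V] [MeasurableSpace V] {μ : Measure V}

/-- Measures for which every exponential of the norm is integrable. -/
def HasExpMoments (μ : Measure V) : Prop :=
  ∀ R : ℝ, Integrable (fun x => Real.exp (R * ‖x‖)) μ

lemma HasExpMoments.isFiniteMeasure (hμ : HasExpMoments μ) : IsFiniteMeasure μ := by
  simpa [integrable_const_iff] using hμ 0

lemma HasExpGrowth.integrable [OpensMeasurableSpace V] {P : V → ℂ} (hP : HasExpGrowth P)
    (hμ : HasExpMoments μ) : Integrable P μ := by
  obtain ⟨hPc, C, R, hPR⟩ := hP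
  exact ((hμ R).const_mul C).mono' hPc.aestronglyMeasurable (.of_forall hPR)

end ExponentialMoments

section LineDerivative

variable {𝕜 E : Type*} [NontriviallyNormedField 𝕜] [AddCommGroup E] [Module 𝕜 E] {f g : E → 𝕜}
  {f' g' : 𝕜} {x v : E}

lemma hasLineDerivAt_add (hf : HasLineDerivAt 𝕜 f f' x v) (hg : HasLineDerivAt 𝕜 g g' x v) :
    HasLineDerivAt 𝕜 (fun y => f y + g y) (f' + g') x v :=
  HasDerivAt.add hf hg

lemma hasLineDerivAt_sub (hf : HasLineDerivAt 𝕜 f f' x v) (hg : HasLineDerivAt 𝕜 g g' x v) :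
    HasLineDerivAt 𝕜 (fun y => f y - g y) (f' - g') x v :=
  HasDerivAt.sub hf hg

lemma hasLineDerivAt_mul (hf : HasLineDerivAt 𝕜 f f' x v) (hg : HasLineDerivAt 𝕜 g g' x v) :
    HasLineDerivAt 𝕜 (fun y => f y * g y) (f' * g x + f x * g') x v := by
  simpa only [HasLineDerivAt, zero_smul, add_zero] using HasDerivAt.fun_mul hf hg

lemma hasLineDerivAt_div (hf : HasLineDerivAt 𝕜 f f' x v) (hg : HasLineDerivAt 𝕜 g g' x v)
    (h : g x ≠ 0) :
    HasLineDerivAt 𝕜 (fun y => f y / g y) ((f' * g x - f x * g') / g x ^ 2) x v := by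
  simpa only [HasLineDerivAt, zero_smul, add_zero] using
    HasDerivAt.fun_div hf hg (by simpa using h)

lemma lineDeriv_eq_of_eqOn_preimage {Z : E → 𝕜} {Z' : 𝕜} (hZ : HasLineDerivAt 𝕜 Z Z' x v)
    {U : Set 𝕜} (hU : IsOpen U) (hx : Z x ∈ U) (hfg : ∀ y, Z y ∈ U → f y = g y)
    (hg : HasLineDerivAt 𝕜 g g' x v) : lineDeriv 𝕜 f x v = g' := by
  have hcont : ContinuousAt (fun t : 𝕜 => Z (x + t • v)) 0 := HasDerivAt.continuousAt hZ
  have hnear : ∀ᶠ t : 𝕜 in nhds 0, Z (x + t • v) ∈ U :=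
    hcont.eventually_mem (hU.mem_nhds (by simpa using hx))
  rw [← hg.lineDeriv]
  exact Filter.EventuallyEq.deriv_eq (hnear.mono fun t ht => hfg _ ht)

end LineDerivative

lemma hasLineDerivAt_clog {E : Type*} [AddCommGroup E] [Module ℂ E] {f : E → ℂ} {f' : ℂ}
    {x v : E} (hf : HasLineDerivAt ℂ f f' x v) (h : f x ∈ Complex.slitPlane) :
    HasLineDerivAt ℂ (fun y => Complex.log (f y)) (f' / f x) x v := by
  simpa only [HasLineDerivAt, zero_smul, add_zero] using
    HasDerivAt.clog hf (by simpa using h)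

section Cumulants

variable {V : Type*} [NormedAddCommGroup V] [NormedSpace ℝ V] [MeasurableSpace V]
  {μ : Measure V} {P : V → ℂ}

/-- The integral of `P` in the presence of the source `ℓ`. For `P = 1` this is the (complex) moment
generating function of `μ`, i.e. the partition function as a function of the source. -/
noncomputable def sourcedMoment (μ : Measure V) (P : V → ℂ) (ℓ : V →L[ℝ] ℂ) : ℂ :=
  ∫ x, P x * Complex.exp (ℓ x) ∂μ

/-- The expectation of `P` in the presence of the source `ℓ`; it is `0` where the partition function
vanishes. -/
noncomputable def sourcedMean (μ : Measure V) (P : V → ℂ) (ℓ : V →L[ℝ] ℂ) : ℂ :=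
  sourcedMoment μ P ℓ / sourcedMoment μ 1 ℓ

/-- The logarithm of the partition function, i.e. the cumulant generating function. -/
noncomputable def logPartition (μ : Measure V) (ℓ : V →L[ℝ] ℂ) : ℂ :=
  Complex.log (sourcedMoment μ 1 ℓ)

lemma sourcedMoment_one_zero (μ : Measure V) : sourcedMoment μ 1 0 = μ.real Set.univ := by
  simp [sourcedMoment]

lemma sourcedMean_zero (μ : Measure V) (P : V → ℂ) : sourcedMean μ P 0 = ⨍ x, P x ∂μ := by
  simp only [sourcedMean, sourcedMoment_one_zero, average_eq, Complex.real_smul,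
    Complex.ofReal_inv]
  simp [sourcedMoment, div_eq_inv_mul]

/-- Sources for which the principal branch of `logPartition` is differentiable. -/
def regularSources (μ : Measure V) : Set (V →L[ℝ] ℂ) :=
  {ℓ | sourcedMoment μ 1 ℓ ∈ Complex.slitPlane}

lemma zero_mem_regularSources [IsFiniteMeasure μ] [NeZero μ] :
    (0 : V →L[ℝ] ℂ) ∈ regularSources μ := by
  rw [regularSources, Set.mem_ofPred_eq, sourcedMoment_one_zero, Complex.ofReal_mem_slitPlane]
  exact measureReal_univ_pos

variable [OpensMeasurableSpace V]

lemma hasLineDerivAt_sourcedMoment (hμ : HasExpMoments μ) (hP : HasExpGrowth P)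
    (ℓ L : V →L[ℝ] ℂ) :
    HasLineDerivAt ℂ (sourcedMoment μ P) (sourcedMoment μ (fun x => P x * L x) ℓ) ℓ L := by
  have hgrowth (t : ℂ) : HasExpGrowth fun x => P x * L x * Complex.exp ((ℓ + t • L) x) :=
    (hP.mul (hasExpGrowth_clm L)).mul (hasExpGrowth_cexp_clm _)
  have hbound : Integrable (fun x => ‖P x * L x * Complex.exp (ℓ x) *
      (Real.exp (‖L‖ * ‖x‖) : ℂ)‖) μ :=
    (((hP.mul (hasExpGrowth_clm L)).mul (hasExpGrowth_cexp_clm ℓ)).mul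
      (hasExpGrowth_exp_norm _)).integrable hμ |>.norm
  have hderiv := (hasDerivAt_integral_of_dominated_loc_of_deriv_le (μ := μ) (x₀ := (0 : ℂ))
    (F := fun t x => P x * Complex.exp ((ℓ + t • L) x))
    (F' := fun t x => P x * L x * Complex.exp ((ℓ + t • L) x))
    (Metric.ball_mem_nhds (0 : ℂ) one_pos)
    (.of_forall fun t => (hP.mul (hasExpGrowth_cexp_clm _)).continuous.aestronglyMeasurable)
    ((hP.mul (hasExpGrowth_cexp_clm _)).integrable hμ)
    (hgrowth 0).continuous.aestronglyMeasurable
    (.of_forall fun x t ht => ?_) hbound (.of_forall fun x t _ => ?_)).2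
  · rw [zero_smul ℂ L, add_zero] at hderiv
    exact hderiv
  · have hexp : ‖Complex.exp (t * L x)‖ ≤ Real.exp (‖L‖ * ‖x‖) := by
      rw [Complex.norm_exp, Real.exp_le_exp]
      calc (t * L x).re ≤ ‖t‖ * ‖L x‖ := (Complex.re_le_norm _).trans_eq (norm_mul _ _)
        _ ≤ 1 * (‖L‖ * ‖x‖) := by
          gcongr
          · exact (mem_ball_zero_iff.1 ht).le
          · exact L.le_opNorm x
        _ = ‖L‖ * ‖x‖ := one_mul _
    simp only [_root_.add_apply, _root_.smul_apply, smul_eq_mul, Complex.exp_add, ← mul_assoc,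
      norm_mul, Complex.norm_real, Real.norm_of_nonneg (Real.exp_pos _).le]
    gcongr
  · have hline : HasDerivAt (fun t : ℂ => ℓ x + t * L x) (L x) t := by
      simpa using ((hasDerivAt_id t).mul_const (L x)).const_add (ℓ x)
    rw [mul_assoc, mul_comm (L x)]
    exact hline.cexp.const_mul (P x)

lemma hasLineDerivAt_logPartition (hμ : HasExpMoments μ) {ℓ : V →L[ℝ] ℂ}
    (hℓ : ℓ ∈ regularSources μ) (L : V →L[ℝ] ℂ) :
    HasLineDerivAt ℂ (logPartition μ) (sourcedMean μ (fun x => L x) ℓ) ℓ L := by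
  have hZ := hasLineDerivAt_sourcedMoment hμ (hasExpGrowth_const 1) ℓ L
  simp only [one_mul] at hZ
  exact hasLineDerivAt_clog hZ hℓ

lemma hasLineDerivAt_sourcedMean (hμ : HasExpMoments μ) (hP : HasExpGrowth P)
    {ℓ : V →L[ℝ] ℂ} (hℓ : ℓ ∈ regularSources μ) (L : V →L[ℝ] ℂ) :
    HasLineDerivAt ℂ (sourcedMean μ P)
      (sourcedMean μ (fun x => P x * L x) ℓ -
        sourcedMean μ P ℓ * sourcedMean μ (fun x => L x) ℓ) ℓ L := by
  have hZ := hasLineDerivAt_sourcedMoment hμ (hasExpGrowth_const 1) ℓ L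
  have hne : sourcedMoment μ 1 ℓ ≠ 0 := Complex.slitPlane_ne_zero hℓ
  simp only [one_mul] at hZ
  have hquotient : (sourcedMoment μ (fun x => P x * L x) ℓ * sourcedMoment μ 1 ℓ -
      sourcedMoment μ P ℓ * sourcedMoment μ (fun x => L x) ℓ) / sourcedMoment μ 1 ℓ ^ 2 =
      sourcedMean μ (fun x => P x * L x) ℓ -
        sourcedMean μ P ℓ * sourcedMean μ (fun x => L x) ℓ := by
    simp only [sourcedMean]
    field_simp
  rw [← hquotient]
  exact hasLineDerivAt_div (hasLineDerivAt_sourcedMoment hμ hP ℓ L) hZ hne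

lemma lineDeriv_eq_of_eqOn_regularSources (hμ : HasExpMoments μ) {f g : (V →L[ℝ] ℂ) → ℂ}
    {ℓ L : V →L[ℝ] ℂ} {g' : ℂ} (hfg : Set.EqOn f g (regularSources μ))
    (hg : HasLineDerivAt ℂ g g' ℓ L) (hℓ : ℓ ∈ regularSources μ) : lineDeriv ℂ f ℓ L = g' :=
  lineDeriv_eq_of_eqOn_preimage (hasLineDerivAt_sourcedMoment hμ (hasExpGrowth_const 1) ℓ L)
    Complex.isOpen_slitPlane hℓ (fun _ => @hfg _) hg

lemma lineDeriv_lineDeriv_logPartition (hμ : HasExpMoments μ) (C D : V →L[ℝ] ℂ)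
    {ℓ : V →L[ℝ] ℂ} (hℓ : ℓ ∈ regularSources μ) :
    lineDeriv ℂ (fun ℓ => lineDeriv ℂ (logPartition μ) ℓ D) ℓ C =
      sourcedMean μ (fun x => D x * C x) ℓ -
        sourcedMean μ (fun x => D x) ℓ * sourcedMean μ (fun x => C x) ℓ :=
  lineDeriv_eq_of_eqOn_regularSources hμ
    (fun _ h => (hasLineDerivAt_logPartition hμ h D).lineDeriv)
    (hasLineDerivAt_sourcedMean hμ (hasExpGrowth_clm D) hℓ C) hℓ

lemma lineDeriv_lineDeriv_lineDeriv_logPartition (hμ : HasExpMoments μ) (B C D : V →L[ℝ] ℂ)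
    {ℓ : V →L[ℝ] ℂ} (hℓ : ℓ ∈ regularSources μ) :
    lineDeriv ℂ (fun ℓ => lineDeriv ℂ (fun ℓ => lineDeriv ℂ (logPartition μ) ℓ D) ℓ C) ℓ B =
      sourcedMean μ (fun x => D x * C x * B x) ℓ -
        sourcedMean μ (fun x => D x * C x) ℓ * sourcedMean μ (fun x => B x) ℓ -
      ((sourcedMean μ (fun x => D x * B x) ℓ -
          sourcedMean μ (fun x => D x) ℓ * sourcedMean μ (fun x => B x) ℓ) *
          sourcedMean μ (fun x => C x) ℓ +
        sourcedMean μ (fun x => D x) ℓ * (sourcedMean μ (fun x => C x * B x) ℓ -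
          sourcedMean μ (fun x => C x) ℓ * sourcedMean μ (fun x => B x) ℓ)) := by
  have hC := hasExpGrowth_clm C
  have hD := hasExpGrowth_clm D
  exact lineDeriv_eq_of_eqOn_regularSources hμ
    (fun _ h => lineDeriv_lineDeriv_logPartition hμ C D h)
    (hasLineDerivAt_sub (hasLineDerivAt_sourcedMean hμ (hD.mul hC) hℓ B)
      (hasLineDerivAt_mul (hasLineDerivAt_sourcedMean hμ hD hℓ B)
        (hasLineDerivAt_sourcedMean hμ hC hℓ B))) hℓ

theorem fourth_lineDeriv_logPartition (hμ : HasExpMoments μ) [NeZero μ] {A B C D : V →L[ℝ] ℂ}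
    (hA : ∫ x, A x ∂μ = 0) (hB : ∫ x, B x ∂μ = 0) (hC : ∫ x, C x ∂μ = 0)
    (hD : ∫ x, D x ∂μ = 0) :
    lineDeriv ℂ (fun ℓ => lineDeriv ℂ (fun ℓ => lineDeriv ℂ (fun ℓ =>
        lineDeriv ℂ (logPartition μ) ℓ D) ℓ C) ℓ B) 0 A =
      ⨍ x, A x * B x * C x * D x ∂μ
        - (⨍ x, A x * B x ∂μ) * (⨍ x, C x * D x ∂μ)
        - (⨍ x, A x * C x ∂μ) * (⨍ x, B x * D x ∂μ)
        - (⨍ x, A x * D x ∂μ) * (⨍ x, B x * C x ∂μ) := by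
  have := hμ.isFiniteMeasure
  have hzero : (0 : V →L[ℝ] ℂ) ∈ regularSources μ := zero_mem_regularSources
  have hmean {L : V →L[ℝ] ℂ} (hL : ∫ x, L x ∂μ = 0) : ⨍ x, L x ∂μ = 0 := by
    rw [average_eq, hL, smul_zero]
  have hmean_hasDeriv {P : V → ℂ} (hP : HasExpGrowth P) :=
    hasLineDerivAt_sourcedMean hμ hP hzero A
  have hB' := hasExpGrowth_clm B
  have hC' := hasExpGrowth_clm C
  have hD' := hasExpGrowth_clm D
  rw [lineDeriv_eq_of_eqOn_regularSources hμ
    (fun _ h => lineDeriv_lineDeriv_lineDeriv_logPartition hμ B C D h)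
    (hasLineDerivAt_sub
      (hasLineDerivAt_sub (hmean_hasDeriv ((hD'.mul hC').mul hB'))
        (hasLineDerivAt_mul (hmean_hasDeriv (hD'.mul hC')) (hmean_hasDeriv hB')))
      (hasLineDerivAt_add
        (hasLineDerivAt_mul
          (hasLineDerivAt_sub (hmean_hasDeriv (hD'.mul hB'))
            (hasLineDerivAt_mul (hmean_hasDeriv hD') (hmean_hasDeriv hB')))
          (hmean_hasDeriv hC'))
        (hasLineDerivAt_mul (hmean_hasDeriv hD')
          (hasLineDerivAt_sub (hmean_hasDeriv (hC'.mul hB'))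
            (hasLineDerivAt_mul (hmean_hasDeriv hC') (hmean_hasDeriv hB')))))) hzero]
  simp only [sourcedMean_zero, hmean hA, hmean hB, hmean hC, hmean hD, mul_zero, zero_mul, sub_zero,
    add_zero, zero_add]
  simp only [mul_comm, mul_left_comm]
  ring

end Cumulants

lemma integral_eq_zero_of_measurePreserving {α : Type*} [MeasurableSpace α] {μ : Measure α}
    {𝕜 : Type*} [RCLike 𝕜] {e : α ≃ᵐ α} (he : MeasurePreserving e μ μ) {f : α → 𝕜} {c : 𝕜}
    (hf : ∀ x, f (e x) = c * f x) (hc : c ≠ 1) : ∫ x, f x ∂μ = 0 := by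
  have hinv : c * ∫ x, f x ∂μ = ∫ x, f x ∂μ := by
    rw [← integral_const_mul, ← he.integral_comp' f]
    exact integral_congr_ae (.of_forall fun x => (hf x).symm)
  by_contra h0
  exact hc ((mul_eq_right₀ h0).1 hinv)

section Perturbation

variable {α E : Type*} [MeasurableSpace α] {μ : Measure α} [NormedAddCommGroup E] [NormedSpace ℝ E]
  {Q : α → ℝ} {f : α → E}

lemma abs_slope_exp_neg_le {g q : ℝ} (hg : 0 < g) (hq : 0 ≤ q) :
    |g⁻¹ * (Real.exp (-(g * q)) - 1)| ≤ q := by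
  have hle : Real.exp (-(g * q)) ≤ 1 := Real.exp_le_one_iff.2 (by nlinarith)
  rw [abs_mul, abs_of_pos (inv_pos.2 hg), abs_of_nonpos (by linarith), inv_mul_le_iff₀ hg]
  linarith [Real.one_sub_le_exp_neg (g * q)]

lemma tendsto_slope_exp_neg (q : ℝ) :
    Filter.Tendsto (fun g : ℝ => g⁻¹ * (Real.exp (-(g * q)) - 1))
      (nhdsWithin 0 (Set.Ioi 0)) (nhds (-q)) := by
  have h : HasDerivAt (fun g : ℝ => Real.exp (-(g * q))) (-q) 0 := by
    simpa using (((hasDerivAt_id (0 : ℝ)).mul_const q).neg).exp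
  simpa using h.tendsto_slope_zero_right

lemma hasDerivWithinAt_integral_exp_neg_smul (hQ : ∀ x, 0 ≤ Q x) (hQm : AEStronglyMeasurable Q μ)
    (hf : Integrable f μ) (hQf : Integrable (fun x => Q x • f x) μ) :
    HasDerivWithinAt (fun g : ℝ => ∫ x, Real.exp (-(g * Q x)) • f x ∂μ)
      (-∫ x, Q x • f x ∂μ) (Set.Ioi 0) 0 := by
  have hmeas (g : ℝ) : AEStronglyMeasurable (fun x => Real.exp (-(g * Q x))) μ :=
    Real.continuous_exp.comp_aestronglyMeasurable (hQm.const_mul g).neg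
  have hint {g : ℝ} (hg : 0 ≤ g) : Integrable (fun x => Real.exp (-(g * Q x)) • f x) μ := by
    refine hf.mono ((hmeas g).smul hf.1) (.of_forall fun x => ?_)
    rw [norm_smul, Real.norm_of_nonneg (Real.exp_pos _).le]
    exact mul_le_of_le_one_left (norm_nonneg _)
      (Real.exp_le_one_iff.2 (neg_nonpos.2 (mul_nonneg hg (hQ x))))
  have hslope {g : ℝ} (hg : 0 < g) :
      slope (fun g : ℝ => ∫ x, Real.exp (-(g * Q x)) • f x ∂μ) 0 g =
        ∫ x, (g⁻¹ * (Real.exp (-(g * Q x)) - 1)) • f x ∂μ := by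
    rw [slope_def_module, sub_zero, ← integral_sub (hint hg.le) (hint le_rfl), ← integral_smul]
    simp only [zero_mul, neg_zero, Real.exp_zero, ← sub_smul, smul_smul]
  rw [hasDerivWithinAt_iff_tendsto_slope' Set.self_notMem_Ioi, ← integral_neg]
  refine (tendsto_integral_filter_of_dominated_convergence
    (F := fun g x => (g⁻¹ * (Real.exp (-(g * Q x)) - 1)) • f x) (fun x => ‖Q x • f x‖)
    (.of_forall fun g => (((hmeas g).sub aestronglyMeasurable_const).const_mul g⁻¹).smul hf.1)
    ?_ hQf.norm (.of_forall fun x => ?_)).congr' ?_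
  · filter_upwards [self_mem_nhdsWithin] with g hg
    refine .of_forall fun x => ?_
    rw [norm_smul, norm_smul, Real.norm_eq_abs, Real.norm_of_nonneg (hQ x)]
    exact mul_le_mul_of_nonneg_right (abs_slope_exp_neg_le hg (hQ x)) (norm_nonneg _)
  · rw [← neg_smul]
    exact (tendsto_slope_exp_neg (Q x)).smul_const (f x)
  · filter_upwards [self_mem_nhdsWithin] with g hg
    exact (hslope hg).symm

end Perturbation

section ComplexGaussian

lemma integrable_exp_linear_sub_sq (R : ℝ) {b : ℝ} (hb : 0 < b) :
    Integrable fun z : ℂ => Real.exp (R * ‖z‖ - b * ‖z‖ ^ 2) := by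
  have hgauss : Integrable fun z : ℂ => Real.exp (-(b / 2) * ‖z‖ ^ 2) := by
    simpa [Complex.norm_exp, ← Complex.ofReal_pow, ← Complex.ofReal_ofNat, ← Complex.ofReal_div,
      ← Complex.ofReal_neg, ← Complex.ofReal_mul] using
      (GaussianFourier.integrable_cexp_neg_mul_sq_norm_add (V := ℂ) (b := ((b / 2 : ℝ) : ℂ))
        (by simpa using hb) 0 0).norm
  refine (hgauss.const_mul (Real.exp (R ^ 2 / (2 * b)))).mono' (by fun_prop)
    (.of_forall fun z => ?_)
  rw [Real.norm_of_nonneg (Real.exp_pos _).le, ← Real.exp_add, Real.exp_le_exp]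
  have hsquare : R ^ 2 / (2 * b) + -(b / 2) * ‖z‖ ^ 2 - (R * ‖z‖ - b * ‖z‖ ^ 2) =
      (R - b * ‖z‖) ^ 2 / (2 * b) := by field_simp; ring
  linarith [show 0 ≤ (R - b * ‖z‖) ^ 2 / (2 * b) by positivity]

lemma integral_exp_neg_mul_sq_mul_sq {b : ℝ} (hb : 0 < b) :
    ∫ z : ℂ, Real.exp (-(b * ‖z‖ ^ 2)) * ‖z‖ ^ 2 = b⁻¹ * ∫ z : ℂ, Real.exp (-(b * ‖z‖ ^ 2)) := by
  have hsq := Complex.integral_rpow_mul_exp_neg_mul_rpow (p := 2) (q := 2) (b := b)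
    (by norm_num) (by norm_num) hb
  have hone := Complex.integral_rpow_mul_exp_neg_mul_rpow (p := 2) (q := 0) (b := b)
    (by norm_num) (by norm_num) hb
  simp only [Real.rpow_two, Real.rpow_zero, one_mul, neg_mul] at hsq hone
  simp only [mul_comm (Real.exp _)]
  rw [hsq, hone, show (-(2 + 2) / 2 : ℝ) = -1 + -1 by norm_num,
    show ((2 + 2) / 2 : ℝ) = 1 + 1 by norm_num, show (-(0 + 2) / 2 : ℝ) = -1 by norm_num,
    show ((0 + 2) / 2 : ℝ) = 1 by norm_num, Real.rpow_add hb, Real.Gamma_add_one one_ne_zero,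
    Real.rpow_neg_one]
  ring

end ComplexGaussian

lemma pi_norm_le_sum_norm {ι : Type*} [Fintype ι] {G : ι → Type*}
    [∀ i, SeminormedAddCommGroup (G i)] (f : ∀ i, G i) : ‖f‖ ≤ ∑ i, ‖f i‖ :=
  (pi_norm_le_iff_of_nonneg (Finset.sum_nonneg fun _ _ => norm_nonneg _)).2 fun i =>
    Finset.single_le_sum (f := fun i => ‖f i‖) (fun _ _ => norm_nonneg _) (Finset.mem_univ i)

section QuarticModel

open scoped ComplexConjugate

variable {ι κ : Type*}

/-- The matrix entry `Φ i k` as a real-linear functional of `Φ`. -/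
noncomputable def entry (i : ι) (k : κ) : (ι → κ → ℂ) →L[ℝ] ℂ :=
  (ContinuousLinearMap.proj k).comp
    (ContinuousLinearMap.proj (R := ℝ) (φ := fun _ : ι => κ → ℂ) i)

/-- The conjugated matrix entry as a real-linear functional. -/
noncomputable def conjEntry (i : ι) (k : κ) : (ι → κ → ℂ) →L[ℝ] ℂ :=
  (Complex.conjCLE : ℂ →L[ℝ] ℂ).comp (entry i k)

@[simp] lemma entry_apply (i : ι) (k : κ) (Φ : ι → κ → ℂ) : entry i k Φ = Φ i k := rfl

@[simp] lemma conjEntry_apply (i : ι) (k : κ) (Φ : ι → κ → ℂ) :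
    conjEntry i k Φ = conj (Φ i k) := rfl

/-- The summand of `Tr((Φ*Φ)²)` attached to the rectangle with opposite corners `x` and `y`; the
entries at `x` and `y` are conjugated. -/
def vertex (x y : ι × κ) (Φ : ι → κ → ℂ) : ℂ :=
  conj (Φ x.1 x.2) * Φ y.1 x.2 * conj (Φ y.1 y.2) * Φ x.1 y.2

lemma vertex_swap (x y : ι × κ) (Φ : ι → κ → ℂ) : vertex y x Φ = vertex x y Φ := by
  simp only [vertex]
  ring

lemma vertex_flip (x y : ι × κ) (Φ : ι → κ → ℂ) :
    vertex (y.1, x.2) (x.1, y.2) Φ = conj (vertex x y Φ) := by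
  simp only [vertex, map_mul, Complex.conj_conj]
  ring

lemma vertex_mul (x y : ι × κ) (w Φ : ι → κ → ℂ) :
    vertex x y (fun i k => w i k * Φ i k) = vertex x y w * vertex x y Φ := by
  simp only [vertex, map_mul]
  ring

lemma vertex_eq_mul (x y : ι × κ) :
    (vertex x y : (ι → κ → ℂ) → ℂ) = fun Φ => conjEntry x.1 x.2 Φ * entry y.1 x.2 Φ *
      conjEntry y.1 y.2 Φ * entry x.1 y.2 Φ := rfl

/-- Entrywise multiplication of a matrix by phases. -/
noncomputable def phaseRotation (w : ι → κ → Circle) : (ι → κ → ℂ) ≃ᵐ (ι → κ → ℂ) :=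
  .piCongrRight fun i => .piCongrRight fun k => (rotation (w i k)).toMeasurableEquiv

@[simp] lemma phaseRotation_apply (w : ι → κ → Circle) (Φ : ι → κ → ℂ) :
    phaseRotation w Φ = fun i k => w i k * Φ i k := rfl

/-- The matrix of phases equal to `I` at `z` and to `1` elsewhere. -/
noncomputable def entryPhase [DecidableEq ι] [DecidableEq κ] (z : ι × κ) (i : ι) (k : κ) : Circle :=
  if (i, k) = z then Circle.exp (Real.pi / 2) else 1

lemma coe_entryPhase [DecidableEq ι] [DecidableEq κ] (z : ι × κ) (i : ι) (k : κ) :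
    (entryPhase z i k : ℂ) = if (i, k) = z then Complex.I else 1 := by
  unfold entryPhase
  split_ifs
  · rw [Circle.coe_exp, Complex.ofReal_div, Complex.ofReal_ofNat, Complex.exp_pi_div_two_mul_I]
  · rfl

lemma vertex_entryPhase_left [DecidableEq ι] [DecidableEq κ] {x y : ι × κ} (hrow : x.1 ≠ y.1)
    (hcol : x.2 ≠ y.2) :
    vertex x y (fun i k => entryPhase x i k) = -Complex.I := by
  simp [vertex, coe_entryPhase, Prod.ext_iff, hrow.symm, hcol.symm]

lemma vertex_entryPhase_ne_I [DecidableEq ι] [DecidableEq κ] {x y z : ι × κ}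
    (h₁ : (x.1, y.2) ≠ z) (h₂ : (y.1, x.2) ≠ z) :
    vertex x y (fun i k => entryPhase z i k) ≠ Complex.I := by
  simp only [vertex, coe_entryPhase, if_neg h₁, if_neg h₂, mul_one]
  split_ifs <;> simp [Complex.ext_iff] <;> norm_num

variable [Fintype ι] [Fintype κ]

lemma hasExpGrowth_vertex (x y : ι × κ) : HasExpGrowth (vertex x y) :=
  (((hasExpGrowth_clm (conjEntry x.1 x.2)).mul (hasExpGrowth_clm (entry y.1 x.2))).mul
    (hasExpGrowth_clm (conjEntry y.1 y.2))).mul (hasExpGrowth_clm (entry x.1 y.2))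

/-- The quartic interaction `Tr((Φ*Φ)²)`, written as the squared Hilbert–Schmidt norm of `Φ*Φ`. -/
noncomputable def quartic (Φ : ι → κ → ℂ) : ℝ :=
  ∑ k, ∑ l, ‖∑ i, conj (Φ i k) * Φ i l‖ ^ 2

lemma quartic_nonneg (Φ : ι → κ → ℂ) : 0 ≤ quartic Φ := by
  unfold quartic
  positivity

lemma continuous_quartic : Continuous (quartic : (ι → κ → ℂ) → ℝ) := by
  unfold quartic
  fun_prop

lemma trace_conjTranspose_mul_self_sq (Φ : ι → κ → ℂ) :
    (((of Φ)ᴴ * of Φ) * ((of Φ)ᴴ * of Φ)).trace = quartic Φ := by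
  have hentry (k l : κ) : ((of Φ)ᴴ * of Φ) k l = ∑ i, conj (Φ i k) * Φ i l := rfl
  have hconj (k l : κ) : ((of Φ)ᴴ * of Φ) k l = conj (((of Φ)ᴴ * of Φ) l k) :=
    ((isHermitian_conjTranspose_mul_self (of Φ)).apply k l).symm
  rw [quartic, Complex.ofReal_sum, trace]
  refine Finset.sum_congr rfl fun k _ => ?_
  rw [diag_apply, Matrix.mul_apply, Complex.ofReal_sum]
  refine Finset.sum_congr rfl fun l _ => ?_
  rw [hconj l k, Complex.mul_conj', Complex.ofReal_pow, hentry]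

lemma quartic_eq_sum_vertex (Φ : ι → κ → ℂ) : (quartic Φ : ℂ) = ∑ x, ∑ y, vertex x y Φ := by
  simp only [quartic, Complex.ofReal_sum, Complex.ofReal_pow, ← Complex.mul_conj', map_sum, map_mul,
    Complex.conj_conj, Finset.sum_mul_sum, Fintype.sum_prod_type_right, vertex]
  refine Finset.sum_congr rfl fun k _ => ?_
  rw [Finset.sum_comm]
  refine Finset.sum_congr rfl fun i _ => Finset.sum_congr rfl fun l _ =>
    Finset.sum_congr rfl fun j _ => ?_
  ring

/-- The action of the quartic matrix model; the weights `a i k` play the role of the sums `E + Ẽ` of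
external-field eigenvalues. -/
noncomputable def action (a : ι → κ → ℝ) (g : ℝ) (Φ : ι → κ → ℂ) : ℝ :=
  ∑ i, ∑ k, a i k * ‖Φ i k‖ ^ 2 + g * quartic Φ

lemma continuous_action (a : ι → κ → ℝ) (g : ℝ) : Continuous (action a g) :=
  (by fun_prop : Continuous fun Φ : ι → κ → ℂ => ∑ i, ∑ k, a i k * ‖Φ i k‖ ^ 2).add
    (continuous_quartic.const_mul g)

/-- The unnormalized Gibbs measure of the quartic matrix model. -/
noncomputable def gibbs (a : ι → κ → ℝ) (g : ℝ) : Measure (ι → κ → ℂ) :=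
  volume.withDensity fun Φ => ENNReal.ofReal (Real.exp (-action a g Φ))

lemma measurable_gibbs_density (a : ι → κ → ℝ) (g : ℝ) :
    Measurable fun Φ => ENNReal.ofReal (Real.exp (-action a g Φ)) :=
  (continuous_action a g).neg.rexp.measurable.ennreal_ofReal

lemma integral_gibbs {F : Type*} [NormedAddCommGroup F] [NormedSpace ℝ F] (a : ι → κ → ℝ) (g : ℝ)
    (f : (ι → κ → ℂ) → F) : ∫ Φ, f Φ ∂gibbs a g = ∫ Φ, Real.exp (-action a g Φ) • f Φ := by
  rw [gibbs, integral_withDensity_eq_integral_toReal_smul (measurable_gibbs_density a g)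
    (.of_forall fun _ => ENNReal.ofReal_lt_top)]
  simp only [ENNReal.toReal_ofReal (Real.exp_pos _).le]

lemma exp_norm_sub_action_le {a : ι → κ → ℝ} {g : ℝ} (hg : 0 ≤ g) (R : ℝ) (Φ : ι → κ → ℂ) :
    Real.exp (-action a g Φ) * Real.exp (R * ‖Φ‖) ≤
      ∏ i, ∏ k, Real.exp (|R| * ‖Φ i k‖ - a i k * ‖Φ i k‖ ^ 2) := by
  rw [← Real.exp_add]
  simp only [← Real.exp_sum, Finset.sum_sub_distrib, ← Finset.mul_sum]
  refine Real.exp_le_exp.2 ?_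
  have hsum : ‖Φ‖ ≤ ∑ i, ∑ k, ‖Φ i k‖ :=
    (pi_norm_le_sum_norm Φ).trans (Finset.sum_le_sum fun i _ => pi_norm_le_sum_norm (Φ i))
  have hnorm : R * ‖Φ‖ ≤ |R| * ∑ i, ∑ k, ‖Φ i k‖ :=
    mul_le_mul (le_abs_self R) hsum (norm_nonneg Φ) (abs_nonneg R)
  have hinteraction : 0 ≤ g * quartic Φ := mul_nonneg hg (quartic_nonneg Φ)
  unfold action
  linarith

lemma hasExpMoments_gibbs {a : ι → κ → ℝ} (ha : ∀ i k, 0 < a i k) {g : ℝ} (hg : 0 ≤ g) :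
    HasExpMoments (gibbs a g) := by
  intro R
  rw [gibbs, integrable_withDensity_iff_integrable_smul' (measurable_gibbs_density a g)
    (.of_forall fun _ => ENNReal.ofReal_lt_top)]
  simp only [ENNReal.toReal_ofReal (Real.exp_pos _).le, smul_eq_mul]
  have hcont := continuous_action a g
  refine Integrable.mono' (g := fun Φ : ι → κ → ℂ =>
    ∏ i, ∏ k, Real.exp (|R| * ‖Φ i k‖ - a i k * ‖Φ i k‖ ^ 2)) ?_
    (by fun_prop) (.of_forall fun Φ => ?_)
  · exact .fintype_prod (f := fun i (φ : κ → ℂ) =>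
      ∏ k, Real.exp (|R| * ‖φ k‖ - a i k * ‖φ k‖ ^ 2)) fun i =>
      .fintype_prod (f := fun k (z : ℂ) => Real.exp (|R| * ‖z‖ - a i k * ‖z‖ ^ 2)) fun k =>
        integrable_exp_linear_sub_sq |R| (ha i k)
  · rw [Real.norm_of_nonneg (by positivity)]
    exact exp_norm_sub_action_le hg R Φ

instance (a : ι → κ → ℝ) (g : ℝ) : NeZero (gibbs a g) := by
  have hrow : (volume : Measure (κ → ℂ)).IsOpenPosMeasure :=
    (inferInstance : (Measure.pi fun _ : κ => (volume : Measure ℂ)).IsOpenPosMeasure)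
  have hpos : (volume : Measure (ι → κ → ℂ)).IsOpenPosMeasure :=
    (inferInstance : (Measure.pi fun _ : ι => (volume : Measure (κ → ℂ))).IsOpenPosMeasure)
  have : NeZero (volume : Measure (ι → κ → ℂ)) :=
    ⟨Measure.measure_univ_ne_zero.1 (isOpen_univ.measure_ne_zero _ Set.univ_nonempty)⟩
  refine ⟨fun h => ?_⟩
  rw [gibbs, withDensity_eq_zero_iff (measurable_gibbs_density a g).aemeasurable] at h
  obtain ⟨Φ, hΦ⟩ := h.exists
  exact (Real.exp_pos _).not_ge (ENNReal.ofReal_eq_zero.1 hΦ)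

lemma measurePreserving_phaseRotation (w : ι → κ → Circle) :
    MeasurePreserving (phaseRotation w) :=
  volume_preserving_pi (f := fun i (φ : κ → ℂ) k => rotation (w i k) (φ k)) fun i =>
    volume_preserving_pi fun k => (rotation (w i k)).measurePreserving

lemma action_zero_phaseRotation (a : ι → κ → ℝ) (w : ι → κ → Circle) (Φ : ι → κ → ℂ) :
    action a 0 (phaseRotation w Φ) = action a 0 Φ := by
  simp only [action, phaseRotation_apply, norm_mul, Circle.norm_coe, one_mul, zero_mul]

lemma quartic_phaseRotation_mul (u : ι → Circle) (v : κ → Circle) (Φ : ι → κ → ℂ) :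
    quartic (phaseRotation (fun i k => u i * v k) Φ) = quartic Φ := by
  have hsum (k l : κ) : ∑ i, conj ((u i * v k : Circle) * Φ i k) * ((u i * v l : Circle) * Φ i l) =
      conj (v k : ℂ) * v l * ∑ i, conj (Φ i k) * Φ i l := by
    rw [Finset.mul_sum]
    refine Finset.sum_congr rfl fun i _ => ?_
    have hu : conj (u i : ℂ) * u i = 1 := by
      rw [Complex.conj_mul', Circle.norm_coe, Complex.ofReal_one, one_pow]
    simp only [Circle.coe_mul, map_mul]
    linear_combination (conj (v k : ℂ) * v l * conj (Φ i k) * Φ i l) * hu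
  simp only [quartic, phaseRotation_apply, hsum, norm_mul, Complex.norm_conj, Circle.norm_coe,
    one_mul]

lemma action_phaseRotation_mul (a : ι → κ → ℝ) (g : ℝ) (u : ι → Circle) (v : κ → Circle)
    (Φ : ι → κ → ℂ) :
    action a g (phaseRotation (fun i k => u i * v k) Φ) = action a g Φ := by
  rw [action, quartic_phaseRotation_mul]
  simp only [action, phaseRotation_apply, norm_mul, Circle.norm_coe, one_mul]

lemma integral_gibbs_eq_zero_of_phase {a : ι → κ → ℝ} {g : ℝ} {w : ι → κ → Circle}
    (hw : ∀ Φ, action a g (phaseRotation w Φ) = action a g Φ) {P : (ι → κ → ℂ) → ℂ} {c : ℂ}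
    (hP : ∀ Φ, P (phaseRotation w Φ) = c * P Φ) (hc : c ≠ 1) : ∫ Φ, P Φ ∂gibbs a g = 0 := by
  rw [integral_gibbs]
  refine integral_eq_zero_of_measurePreserving (measurePreserving_phaseRotation w)
    (fun Φ => ?_) hc
  rw [hw, hP, mul_smul_comm]

section Signs

variable {a : ι → κ → ℝ} {g : ℝ}

lemma integral_gibbs_eq_zero_of_odd {P : (ι → κ → ℂ) → ℂ} (hP : ∀ Φ, P (-Φ) = -P Φ) :
    ∫ Φ, P Φ ∂gibbs a g = 0 := by
  refine integral_gibbs_eq_zero_of_phase (w := fun _ _ => -1 * 1) (c := -1)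
    (action_phaseRotation_mul a g (fun _ => -1) fun _ => 1) (fun Φ => ?_) (by norm_num)
  rw [neg_one_mul (P Φ), ← hP]
  congr
  ext
  simp

lemma integral_gibbs_eq_zero_of_row [DecidableEq ι] {P : (ι → κ → ℂ) → ℂ} (i : ι)
    (hP : ∀ Φ, P (fun j k => (if j = i then -1 else 1) * Φ j k) = -P Φ) :
    ∫ Φ, P Φ ∂gibbs a g = 0 := by
  refine integral_gibbs_eq_zero_of_phase (c := -1)
    (action_phaseRotation_mul a g (fun j => if j = i then -1 else 1) fun _ => 1) (fun Φ => ?_)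
    (by norm_num)
  rw [neg_one_mul, ← hP]
  congr with j k
  by_cases h : j = i <;> simp [h]

lemma integral_gibbs_eq_zero_of_column [DecidableEq κ] {P : (ι → κ → ℂ) → ℂ} (k : κ)
    (hP : ∀ Φ, P (fun i l => (if l = k then -1 else 1) * Φ i l) = -P Φ) :
    ∫ Φ, P Φ ∂gibbs a g = 0 := by
  refine integral_gibbs_eq_zero_of_phase (c := -1)
    (action_phaseRotation_mul a g (fun _ => 1) fun l => if l = k then -1 else 1) (fun Φ => ?_)
    (by norm_num)
  rw [neg_one_mul, ← hP]
  congr with i l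
  by_cases h : l = k <;> simp [h]

end Signs

theorem fourth_lineDeriv_logPartition_gibbs {a : ι → κ → ℝ} (ha : ∀ i k, 0 < a i k) {g : ℝ}
    (hg : 0 ≤ g) {x y : ι × κ} (hrow : x.1 ≠ y.1) (hcol : x.2 ≠ y.2) (s : ℝ) :
    lineDeriv ℂ (fun ℓ => lineDeriv ℂ (fun ℓ => lineDeriv ℂ (fun ℓ =>
        lineDeriv ℂ (logPartition (gibbs a g)) ℓ (s • entry x.1 y.2)) ℓ (s • conjEntry y.1 y.2)) ℓ
          (s • entry y.1 x.2)) 0 (s • conjEntry x.1 x.2) =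
      (s : ℂ) ^ 4 * ⨍ Φ, vertex x y Φ ∂gibbs a g := by
  classical
  have hodd (L : (ι → κ → ℂ) →L[ℝ] ℂ) : ∫ Φ, L Φ ∂gibbs a g = 0 :=
    integral_gibbs_eq_zero_of_odd (map_neg L)
  have hAB : ⨍ Φ, (s • conjEntry x.1 x.2) Φ * (s • entry y.1 x.2) Φ ∂gibbs a g = 0 := by
    rw [average_eq, integral_gibbs_eq_zero_of_row x.1 fun Φ => ?_, smul_zero]
    simp [hrow.symm]
  have hAC : ⨍ Φ, (s • conjEntry x.1 x.2) Φ * (s • conjEntry y.1 y.2) Φ ∂gibbs a g = 0 := by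
    rw [average_eq, integral_gibbs_eq_zero_of_row x.1 fun Φ => ?_, smul_zero]
    simp [hrow.symm]
  have hAD : ⨍ Φ, (s • conjEntry x.1 x.2) Φ * (s • entry x.1 y.2) Φ ∂gibbs a g = 0 := by
    rw [average_eq, integral_gibbs_eq_zero_of_column x.2 fun Φ => ?_, smul_zero]
    simp [hcol.symm]
  rw [fourth_lineDeriv_logPartition (hasExpMoments_gibbs ha hg) (hodd _) (hodd _) (hodd _) (hodd _),
    hAB, hAC, hAD, zero_mul, zero_mul, zero_mul, sub_zero, sub_zero, sub_zero, average_eq,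
    average_eq, mul_smul_comm, ← integral_const_mul]
  congr 2 with Φ
  simp only [_root_.smul_apply, Complex.real_smul, vertex_eq_mul]
  ring

section Wick

variable {a : ι → κ → ℝ} {x y x' y' : ι × κ}

lemma integral_gibbs_zero_prod (a : ι → κ → ℝ) (f : ι → κ → ℂ → ℝ) :
    ∫ Φ, ∏ i, ∏ k, f i k (Φ i k) ∂gibbs a 0 =
      ∏ i, ∏ k, ∫ z, Real.exp (-(a i k * ‖z‖ ^ 2)) * f i k z := by
  rw [integral_gibbs]
  simp only [action, zero_mul, add_zero, ← Finset.sum_neg_distrib, Real.exp_sum, smul_eq_mul,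
    ← Finset.prod_mul_distrib]
  rw [integral_fintype_prod_volume_eq_prod fun i (φ : κ → ℂ) =>
    ∏ k, Real.exp (-(a i k * ‖φ k‖ ^ 2)) * f i k (φ k)]
  exact Finset.prod_congr rfl fun i _ => integral_fintype_prod_volume_eq_prod fun k z =>
    Real.exp (-(a i k * ‖z‖ ^ 2)) * f i k z

lemma average_gibbs_zero_prod_norm_sq (ha : ∀ i k, 0 < a i k) (S : Finset (ι × κ)) :
    ⨍ Φ, ∏ z ∈ S, ‖Φ z.1 z.2‖ ^ 2 ∂gibbs a 0 = ∏ z ∈ S, (a z.1 z.2)⁻¹ := by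
  classical
  have hprod (c : ι → κ → ℝ) :
      ∏ z ∈ S, c z.1 z.2 = ∏ i, ∏ k, if (i, k) ∈ S then c i k else 1 := by
    rw [← Fintype.prod_prod_type' fun i k => if (i, k) ∈ S then c i k else 1,
      Fintype.prod_ite_mem]
  have := (hasExpMoments_gibbs ha le_rfl).isFiniteMeasure
  have hmass := integral_gibbs_zero_prod a fun _ _ _ => 1
  have hmoment := integral_gibbs_zero_prod a fun i k z => if (i, k) ∈ S then ‖z‖ ^ 2 else 1
  simp only [Finset.prod_const_one, integral_const, smul_eq_mul, mul_one] at hmass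
  have hfactor (i : ι) (k : κ) :
      ∫ z : ℂ, Real.exp (-(a i k * ‖z‖ ^ 2)) * (if (i, k) ∈ S then ‖z‖ ^ 2 else 1) =
        (if (i, k) ∈ S then (a i k)⁻¹ else 1) * ∫ z : ℂ, Real.exp (-(a i k * ‖z‖ ^ 2)) := by
    split_ifs
    · exact integral_exp_neg_mul_sq_mul_sq (ha i k)
    · simp only [mul_one, one_mul]
  simp only [hfactor, Finset.prod_mul_distrib, ← hmass, ← hprod fun i k => (a i k)⁻¹] at hmoment
  have hnorm (Φ : ι → κ → ℂ) := hprod fun i k => ‖Φ i k‖ ^ 2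
  simp only [average_eq, hnorm, hmoment, smul_eq_mul]
  rw [mul_comm, mul_assoc, mul_inv_cancel₀ measureReal_univ_pos.ne', mul_one]

-- Charge conservation: if the phase of the entry at `x` rotates, then that entry, conjugated in
-- `vertex x y`, can only be compensated by an unconjugated one in the other vertex.
lemma integral_gibbs_zero_vertex_mul_vertex_eq_zero (hrow : x.1 ≠ y.1) (hcol : x.2 ≠ y.2)
    (h₁ : (x'.1, y'.2) ≠ x) (h₂ : (y'.1, x'.2) ≠ x) :
    ∫ Φ, vertex x' y' Φ * vertex x y Φ ∂gibbs a 0 = 0 := by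
  classical
  refine integral_gibbs_eq_zero_of_phase (action_zero_phaseRotation a (entryPhase x))
    (c := vertex x' y' (fun i k => entryPhase x i k) * -Complex.I) (fun Φ => ?_) fun h => ?_
  · rw [phaseRotation_apply, vertex_mul, vertex_mul, vertex_entryPhase_left hrow hcol]
    ring
  · refine vertex_entryPhase_ne_I h₁ h₂ ?_
    linear_combination Complex.I * h + vertex x' y' (fun i k => entryPhase x i k) * Complex.I_sq

lemma integral_gibbs_zero_vertex (hrow : x.1 ≠ y.1) (hcol : x.2 ≠ y.2) :
    ∫ Φ, vertex x y Φ ∂gibbs a 0 = 0 := by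
  classical
  refine integral_gibbs_eq_zero_of_phase (action_zero_phaseRotation a (entryPhase x))
    (c := -Complex.I) (fun Φ => ?_) fun h => ?_
  · rw [phaseRotation_apply, vertex_mul, vertex_entryPhase_left hrow hcol]
  · simpa using congrArg Complex.re h

lemma integral_gibbs_zero_vertex_mul_vertex_eq_zero_of_ne (hrow : x.1 ≠ y.1) (hcol : x.2 ≠ y.2)
    {p : (ι × κ) × (ι × κ)} (h₁ : p ≠ ((y.1, x.2), (x.1, y.2)))
    (h₂ : p ≠ ((x.1, y.2), (y.1, x.2))) :
    ∫ Φ, vertex p.1 p.2 Φ * vertex x y Φ ∂gibbs a 0 = 0 := by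
  by_cases hx : (p.1.1, p.2.2) ≠ x ∧ (p.2.1, p.1.2) ≠ x
  · exact integral_gibbs_zero_vertex_mul_vertex_eq_zero hrow hcol hx.1 hx.2
  by_cases hy : (p.1.1, p.2.2) ≠ y ∧ (p.2.1, p.1.2) ≠ y
  · simp only [← vertex_swap x y]
    exact integral_gibbs_zero_vertex_mul_vertex_eq_zero hrow.symm hcol.symm hy.1 hy.2
  · obtain ⟨⟨i, k⟩, j, l⟩ := p
    grind

lemma integral_gibbs_zero_quartic_smul_vertex (ha : ∀ i k, 0 < a i k) (hrow : x.1 ≠ y.1)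
    (hcol : x.2 ≠ y.2) :
    ∫ Φ, quartic Φ • vertex x y Φ ∂gibbs a 0 =
      2 * ∫ Φ, conj (vertex x y Φ) * vertex x y Φ ∂gibbs a 0 := by
  have hint (p : (ι × κ) × (ι × κ)) :
      Integrable (fun Φ => vertex p.1 p.2 Φ * vertex x y Φ) (gibbs a 0) :=
    ((hasExpGrowth_vertex p.1 p.2).mul (hasExpGrowth_vertex x y)).integrable
      (hasExpMoments_gibbs ha le_rfl)
  have hne : ((y.1, x.2), (x.1, y.2)) ≠ (((x.1, y.2), (y.1, x.2)) : (ι × κ) × (ι × κ)) := by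
    simp [hrow.symm]
  simp only [Complex.real_smul, quartic_eq_sum_vertex, ← Fintype.sum_prod_type',
    Finset.sum_mul]
  rw [integral_finsetSum _ fun p _ => hint p, Fintype.sum_eq_add _ _ hne fun p hp =>
    integral_gibbs_zero_vertex_mul_vertex_eq_zero_of_ne hrow hcol hp.1 hp.2, two_mul]
  simp only [vertex_swap (y.1, x.2) (x.1, y.2), vertex_flip]

lemma average_gibbs_zero_conj_vertex_mul_vertex (ha : ∀ i k, 0 < a i k) (hrow : x.1 ≠ y.1)
    (hcol : x.2 ≠ y.2) :
    ⨍ Φ, conj (vertex x y Φ) * vertex x y Φ ∂gibbs a 0 =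
      1 / (a x.1 x.2 * a y.1 x.2 * a y.1 y.2 * a x.1 y.2 : ℝ) := by
  classical
  have hprod {M : Type} [CommMonoid M] (c : ι × κ → M) :
      ∏ z ∈ {x, (y.1, x.2), y, (x.1, y.2)}, c z = c x * (c (y.1, x.2) * (c y * c (x.1, y.2))) := by
    rw [Finset.prod_insert, Finset.prod_insert, Finset.prod_pair] <;>
      simp [Prod.ext_iff, hrow, hcol, hrow.symm]
  have hnorm (Φ : ι → κ → ℂ) : conj (vertex x y Φ) * vertex x y Φ =
      (∏ z ∈ {x, (y.1, x.2), y, (x.1, y.2)}, ‖Φ z.1 z.2‖ ^ 2 : ℝ) := by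
    rw [hprod, Complex.conj_mul', vertex]
    simp only [norm_mul, Complex.norm_conj]
    push_cast
    ring
  simp only [hnorm, average_eq, integral_complex_ofReal]
  rw [Complex.real_smul, ← Complex.ofReal_mul, ← smul_eq_mul, ← average_eq,
    average_gibbs_zero_prod_norm_sq ha, hprod]
  push_cast
  ring

lemma average_gibbs_zero_quartic_smul_vertex (ha : ∀ i k, 0 < a i k) (hrow : x.1 ≠ y.1)
    (hcol : x.2 ≠ y.2) :
    ⨍ Φ, quartic Φ • vertex x y Φ ∂gibbs a 0 =
      2 / (a x.1 x.2 * a y.1 x.2 * a y.1 y.2 * a x.1 y.2 : ℝ) := by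
  rw [average_eq, integral_gibbs_zero_quartic_smul_vertex ha hrow hcol, ← mul_smul_comm,
    ← average_eq, average_gibbs_zero_conj_vertex_mul_vertex ha hrow hcol, mul_one_div]

end Wick

section FirstOrder

variable {a : ι → κ → ℝ} {F : Type*} [NormedAddCommGroup F] [NormedSpace ℝ F]
  {P : (ι → κ → ℂ) → F}

lemma integral_gibbs_eq_integral_gibbs_zero (a : ι → κ → ℝ) (g : ℝ) (P : (ι → κ → ℂ) → F) :
    ∫ Φ, P Φ ∂gibbs a g = ∫ Φ, Real.exp (-(g * quartic Φ)) • P Φ ∂gibbs a 0 := by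
  rw [integral_gibbs, integral_gibbs]
  congr with Φ
  rw [smul_smul, ← Real.exp_add, action, action]
  congr 2
  ring

lemma hasDerivWithinAt_integral_gibbs (hP : Integrable P (gibbs a 0))
    (hQP : Integrable (fun Φ => quartic Φ • P Φ) (gibbs a 0)) :
    HasDerivWithinAt (fun g => ∫ Φ, P Φ ∂gibbs a g) (-∫ Φ, quartic Φ • P Φ ∂gibbs a 0)
      (Set.Ioi 0) 0 := by
  simp only [integral_gibbs_eq_integral_gibbs_zero a _ P]
  exact hasDerivWithinAt_integral_exp_neg_smul quartic_nonneg
    continuous_quartic.aestronglyMeasurable hP hQP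

lemma HasExpGrowth.integrable_quartic_smul {P : (ι → κ → ℂ) → ℂ} (hP : HasExpGrowth P)
    {μ : Measure (ι → κ → ℂ)} (hμ : HasExpMoments μ) :
    Integrable (fun Φ => quartic Φ • P Φ) μ := by
  simp only [Complex.real_smul, quartic_eq_sum_vertex, Finset.sum_mul]
  exact integrable_finsetSum _ fun x _ => integrable_finsetSum _ fun y _ =>
    ((hasExpGrowth_vertex x y).mul hP).integrable hμ

lemma hasDerivWithinAt_average_gibbs (ha : ∀ i k, 0 < a i k) {P : (ι → κ → ℂ) → ℂ}
    (hP : HasExpGrowth P) (hzero : ∫ Φ, P Φ ∂gibbs a 0 = 0) :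
    HasDerivWithinAt (fun g => ⨍ Φ, P Φ ∂gibbs a g) (-⨍ Φ, quartic Φ • P Φ ∂gibbs a 0)
      (Set.Ioi 0) 0 := by
  have hμ := hasExpMoments_gibbs ha le_rfl
  have := hμ.isFiniteMeasure
  have hone : HasExpGrowth fun _ : ι → κ → ℂ => (1 : ℂ) := hasExpGrowth_const 1
  have hmass : ∫ _, (1 : ℂ) ∂gibbs a 0 ≠ 0 := by simpa using measureReal_univ_pos.ne'
  have hquot := (hasDerivWithinAt_integral_gibbs (hP.integrable hμ)
    (hP.integrable_quartic_smul hμ)).fun_div (hasDerivWithinAt_integral_gibbs (hone.integrable hμ)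
      (hone.integrable_quartic_smul hμ)) hmass
  have havg (P : (ι → κ → ℂ) → ℂ) (g : ℝ) :
      ⨍ Φ, P Φ ∂gibbs a g = (∫ Φ, P Φ ∂gibbs a g) / ∫ _, (1 : ℂ) ∂gibbs a g := by
    simp [average_eq, div_eq_inv_mul]
  simp only [havg]
  rw [hzero, zero_mul, sub_zero, pow_two, mul_div_mul_right _ _ hmass, neg_div] at hquot
  exact hquot

end FirstOrder

section FourPoint

variable {a : ι → κ → ℝ} {x y : ι × κ}

/-- The connected 4-point function of the quartic model with weights `ν • a` and coupling
`ν * lam / 2`, at the corners `x`, `(y.1, x.2)`, `y`, `(x.1, y.2)`; sources enter with the factor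
`ν`, and the LSZ model is the square case `ν = N`. -/
noncomputable def fourPointFunction (ν : ℝ) (a : ι → κ → ℝ) (lam : ℝ) (x y : ι × κ) : ℂ :=
  (1 / (ν : ℂ)) * lineDeriv ℂ (fun ℓ => lineDeriv ℂ (fun ℓ => lineDeriv ℂ (fun ℓ =>
    lineDeriv ℂ (logPartition (gibbs (ν • a) (ν * (lam / 2)))) ℓ (ν • entry x.1 y.2)) ℓ
      (ν • conjEntry y.1 y.2)) ℓ (ν • entry y.1 x.2)) 0 (ν • conjEntry x.1 x.2)

lemma fourPointFunction_eq_average {ν : ℝ} (hν : 0 < ν) (ha : ∀ i k, 0 < a i k) {lam : ℝ}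
    (hlam : 0 ≤ lam) (hrow : x.1 ≠ y.1) (hcol : x.2 ≠ y.2) :
    fourPointFunction ν a lam x y =
      (ν : ℂ) ^ 3 * ⨍ Φ, vertex x y Φ ∂gibbs (ν • a) (ν * (lam / 2)) := by
  have hνa (i : ι) (k : κ) : 0 < (ν • a) i k := mul_pos hν (ha i k)
  have hνC : (ν : ℂ) ≠ 0 := Complex.ofReal_ne_zero.2 hν.ne'
  rw [fourPointFunction, fourth_lineDeriv_logPartition_gibbs hνa
    (by positivity) hrow hcol, ← mul_assoc]
  field_simp

lemma fourPointFunction_zero {ν : ℝ} (hν : 0 < ν) (ha : ∀ i k, 0 < a i k) (hrow : x.1 ≠ y.1)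
    (hcol : x.2 ≠ y.2) : fourPointFunction ν a 0 x y = 0 := by
  rw [fourPointFunction_eq_average hν ha le_rfl hrow hcol, zero_div, mul_zero, average_eq,
    integral_gibbs_zero_vertex hrow hcol, smul_zero, mul_zero]

lemma hasDerivWithinAt_fourPointFunction {ν : ℝ} (hν : 0 < ν) (ha : ∀ i k, 0 < a i k)
    (hrow : x.1 ≠ y.1) (hcol : x.2 ≠ y.2) :
    HasDerivWithinAt (fun lam => fourPointFunction ν a lam x y)
      (-(1 / (a x.1 x.2 * a y.1 x.2 * a y.1 y.2 * a x.1 y.2)) : ℂ) (Set.Ioi 0) 0 := by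
  have hνa (i : ι) (k : κ) : 0 < (ν • a) i k := mul_pos hν (ha i k)
  have hcoupling : HasDerivWithinAt (fun lam : ℝ => ν * (lam / 2)) (ν / 2) (Set.Ioi 0) 0 := by
    simpa only [mul_one_div] using
      (((hasDerivAt_id' (0 : ℝ)).div_const 2).const_mul ν).hasDerivWithinAt
  have hmaps : Set.MapsTo (fun lam : ℝ => ν * (lam / 2)) (Set.Ioi 0) (Set.Ioi 0) :=
    fun lam hlam => mul_pos hν (half_pos hlam)
  have havg := hasDerivWithinAt_average_gibbs hνa (hasExpGrowth_vertex x y)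
    (integral_gibbs_zero_vertex hrow hcol)
  rw [average_gibbs_zero_quartic_smul_vertex hνa hrow hcol] at havg
  have hderiv := (HasDerivWithinAt.scomp_of_eq (0 : ℝ) havg hcoupling hmaps (by simp)).const_mul
    ((ν : ℂ) ^ 3)
  have hνC : (ν : ℂ) ≠ 0 := Complex.ofReal_ne_zero.2 hν.ne'
  refine (hderiv.congr (fun lam hlam => ?_) ?_).congr_deriv ?_
  · exact fourPointFunction_eq_average hν ha (Set.mem_Ioi.1 hlam).le hrow hcol
  · exact fourPointFunction_eq_average hν ha le_rfl hrow hcol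
  · simp only [Complex.real_smul, Pi.smul_apply, smul_eq_mul]
    push_cast
    field_simp

theorem lsz_four_point_perturbative_general {ν : ℝ} (hν : 0 < ν) (ha : ∀ i k, 0 < a i k)
    (hrow : x.1 ≠ y.1) (hcol : x.2 ≠ y.2) :
    fourPointFunction ν a 0 x y = 0 ∧
    Filter.Tendsto (fun lam : ℝ => fourPointFunction ν a lam x y / (lam : ℂ))
      (nhdsWithin 0 (Set.Ioi 0))
      (nhds (-(1 / (a x.1 x.2 * a y.1 x.2 * a y.1 y.2 * a x.1 y.2)))) := by
  have hzero := fourPointFunction_zero hν ha hrow hcol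
  refine ⟨hzero, ?_⟩
  have hslope := (hasDerivWithinAt_iff_tendsto_slope' Set.self_notMem_Ioi).1
    (hasDerivWithinAt_fourPointFunction hν ha hrow hcol)
  refine hslope.congr fun lam => ?_
  rw [slope_def_module, hzero, sub_zero, sub_zero, Complex.real_smul, Complex.ofReal_inv,
    div_eq_inv_mul]

end FourPoint

end QuarticModel

section LSZ

open scoped ComplexConjugate

variable {N : ℕ}

/-- The linear functional of `Φ` that the sources `J` and `K` add to the exponent. -/
noncomputable def lszSource (N : ℕ) (J K : Fin N → Fin N → ℂ) :
    (Fin N → Fin N → ℂ) →L[ℝ] ℂ :=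
  (N : ℂ) • (∑ m, ∑ n, J n m • conjEntry n m + ∑ m, ∑ n, K m n • entry n m)

lemma lszSource_apply (J K Φ : Fin N → Fin N → ℂ) :
    lszSource N J K Φ =
      N * (∑ m, ∑ n, J n m * conj (Φ n m) + ∑ m, ∑ n, K m n * Φ n m) := by
  simp [lszSource, mul_add]

lemma lszSource_zero : lszSource N 0 0 = 0 := by
  ext Φ
  simp [lszSource_apply]

lemma sum_sum_eMat_mul (a b : Fin N) (f : Fin N → Fin N → ℂ) :
    ∑ i, ∑ j, eMat N a b i j * f i j = f a b := by
  rw [Fintype.sum_eq_single a, Fintype.sum_eq_single b] <;> simp +contextual [eMat]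

lemma lszSource_add_smul_eMat_left (J K : Fin N → Fin N → ℂ) (a b : Fin N) (t : ℂ) :
    lszSource N (J + t • eMat N a b) K = lszSource N J K + t • (N : ℝ) • conjEntry a b := by
  ext Φ
  have hsum : ∑ m, ∑ n, eMat N a b n m * conj (Φ n m) = conj (Φ a b) := by
    rw [Finset.sum_comm, sum_sum_eMat_mul a b fun n m => conj (Φ n m)]
  simp only [lszSource_apply, _root_.add_apply, _root_.smul_apply, Pi.add_apply, Pi.smul_apply,
    smul_eq_mul, add_mul, mul_assoc, Finset.sum_add_distrib, ← Finset.mul_sum, hsum,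
    conjEntry_apply, Complex.real_smul, Complex.ofReal_natCast]
  ring

lemma lszSource_add_smul_eMat_right (J K : Fin N → Fin N → ℂ) (a b : Fin N) (t : ℂ) :
    lszSource N J (K + t • eMat N a b) = lszSource N J K + t • (N : ℝ) • entry b a := by
  ext Φ
  have hsum : ∑ m, ∑ n, eMat N a b m n * Φ n m = Φ b a :=
    sum_sum_eMat_mul a b fun m n => Φ n m
  simp only [lszSource_apply, _root_.add_apply, _root_.smul_apply, Pi.add_apply, Pi.smul_apply,
    smul_eq_mul, add_mul, mul_assoc, Finset.sum_add_distrib, ← Finset.mul_sum, hsum,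
    entry_apply, Complex.real_smul, Complex.ofReal_natCast]
  ring

lemma dJ_comp_lszSource (f : ((Fin N → Fin N → ℂ) →L[ℝ] ℂ) → ℂ) (a b : Fin N) :
    dJ N a b (fun J K => f (lszSource N J K)) =
      fun J K => lineDeriv ℂ f (lszSource N J K) ((N : ℝ) • conjEntry a b) := by
  funext J K
  simp only [dJ, lineDeriv, lszSource_add_smul_eMat_left]

lemma dK_comp_lszSource (f : ((Fin N → Fin N → ℂ) →L[ℝ] ℂ) → ℂ) (a b : Fin N) :
    dK N a b (fun J K => f (lszSource N J K)) =
      fun J K => lineDeriv ℂ f (lszSource N J K) ((N : ℝ) • entry b a) := by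
  funext J K
  simp only [dK, lineDeriv, lszSource_add_smul_eMat_right]

lemma natCast_mul_lszAction (E Et : Fin N → ℝ) (lam : ℝ) (Φ : Fin N → Fin N → ℂ) :
    N * lszAction N E Et lam Φ =
      action ((N : ℝ) • fun n m => E n + Et m) (N * (lam / 2)) Φ := by
  rw [lszAction, trace_conjTranspose_mul_self_sq]
  simp only [action, Complex.normSq_eq_norm_sq, Pi.smul_apply, smul_eq_mul, mul_assoc,
    ← Finset.mul_sum]
  push_cast
  ring

lemma lszZ_eq_sourcedMoment (E Et : Fin N → ℝ) (lam : ℝ) (J K : Fin N → Fin N → ℂ) :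
    lszZ N E Et lam J K =
      sourcedMoment (gibbs ((N : ℝ) • fun n m => E n + Et m) (N * (lam / 2))) 1
        (lszSource N J K) := by
  rw [lszZ, sourcedMoment, integral_gibbs]
  congr with Φ
  rw [lszIntegrand, neg_mul, natCast_mul_lszAction, ← lszSource_apply, Complex.exp_add,
    ← Complex.ofReal_neg, ← Complex.ofReal_exp, Pi.one_apply, one_mul, Complex.real_smul]

lemma lszG4_eq_fourPointFunction (E Et : Fin N → ℝ) (p₁ q₁ p₂ q₂ : Fin N) (lam : ℝ) :
    lszG4 N E Et p₁ q₁ p₂ q₂ lam =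
      fourPointFunction N (fun n m => E n + Et m) lam (p₁, q₁) (p₂, q₂) := by
  have hlog : (fun J K => Complex.log (lszZ N E Et lam J K)) = fun J K =>
      logPartition (gibbs ((N : ℝ) • fun n m => E n + Et m) (N * (lam / 2))) (lszSource N J K) := by
    simp only [lszZ_eq_sourcedMoment, logPartition]
  rw [lszG4, hlog, dK_comp_lszSource, dJ_comp_lszSource fun ℓ => lineDeriv ℂ _ ℓ _,
    dK_comp_lszSource fun ℓ => lineDeriv ℂ _ ℓ _, dJ_comp_lszSource fun ℓ => lineDeriv ℂ _ ℓ _]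
  simp only [lszSource_zero, fourPointFunction, Complex.ofReal_natCast]

end LSZ

/-- First-order perturbative expansion of the LSZ 4-point function:
for `p₁ ≠ p₂`, `q₁ ≠ q₂` one has `G_{|p₁q₁p₂q₂|}(0) = 0` and
`lim_{λ→0⁺} G_{|p₁q₁p₂q₂|}(λ)/λ
  = −1/[(E_{p₁}+Ẽ_{q₁})(E_{p₂}+Ẽ_{q₁})(E_{p₂}+Ẽ_{q₂})(E_{p₁}+Ẽ_{q₂})]`. -/
theorem lsz_four_point_perturbative
    (N : ℕ) (hN : 1 ≤ N) (E Et : Fin N → ℝ)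
    (hE : ∀ n, 0 < E n) (hEt : ∀ n, 0 < Et n)
    (p₁ p₂ q₁ q₂ : Fin N) (hp : p₁ ≠ p₂) (hq : q₁ ≠ q₂) :
    (lszG4 N E Et p₁ q₁ p₂ q₂ 0 = 0) ∧
    Filter.Tendsto
      (fun lam : ℝ => lszG4 N E Et p₁ q₁ p₂ q₂ lam / (lam : ℂ))
      (nhdsWithin 0 (Set.Ioi 0))
      (nhds (-(1 / ((((E p₁ + Et q₁ : ℝ)) : ℂ) * (((E p₂ + Et q₁ : ℝ)) : ℂ) *
        (((E p₂ + Et q₂ : ℝ)) : ℂ) * (((E p₁ + Et q₂ : ℝ)) : ℂ))))) := by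
  simp only [lszG4_eq_fourPointFunction]
  exact lsz_four_point_perturbative_general (x := (p₁, q₁)) (y := (p₂, q₂)) (Nat.cast_pos.2 hN)
    (fun n m => add_pos (hE n) (hEt m)) hp hq
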